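/- Let G be a simple connected C4-free positively LLY-curved graph with minimum degree at least 2 and maximum degree at least 4. Then the maximum degree of G is even. -/

import Mathlib

open Finset

noncomputable section
open scoped Classical

variable {V : Type*}

/-- Degree of a vertex. -/
def deg [Fintype V] (G : SimpleGraph V) (x : V) : ℕ :=
  (Finset.univ.filter fun z => G.Adj x z).card

/-- Maximum degree. -/
def maxDeg [Fintype V] (G : SimpleGraph V) : ℕ :=
  Finset.univ.sup (deg G)

/-- Normalized graph Laplacian. -/
def lap [Fintype V] (G : SimpleGraph V) (f : V → ℝ) (x : V) : ℝ :=
  (deg G x : ℝ)⁻¹ * ∑ z ∈ Finset.univ.filter (fun z => G.Adj x z), (f z - f x)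

/-- `f` is 1-Lipschitz with respect to the graph distance. -/
def Lip1 (G : SimpleGraph V) (f : V → ℝ) : Prop :=
  ∀ u v : V, |f u - f v| ≤ (G.dist u v : ℝ)

/-- Lin-Lu-Yau curvature via the Münch–Wojciechowski limit-free formulation. -/
def kappa [Fintype V] (G : SimpleGraph V) (x y : V) : ℝ :=
  sInf {r : ℝ | ∃ f : V → ℝ, Lip1 G f ∧ f y - f x = 1 ∧ r = lap G f x - lap G f y}

/-- Every edge has positive Lin-Lu-Yau curvature. -/
def PosLLY [Fintype V] (G : SimpleGraph V) : Prop :=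
  ∀ x y : V, G.Adj x y → 0 < kappa G x y

/-- `G` contains no 4-cycle (as a subgraph). -/
def C4Free (G : SimpleGraph V) : Prop :=
  ∀ a b c d : V, a ≠ b → b ≠ c → c ≠ d → d ≠ a → a ≠ c → b ≠ d →
    ¬(G.Adj a b ∧ G.Adj b c ∧ G.Adj c d ∧ G.Adj d a)

/-- Cycle graph on `ZMod n`. -/
def cyc (n : ℕ) : SimpleGraph (ZMod n) :=
  SimpleGraph.fromRel (fun i j => j = i + 1)

/-- Friendship graph `F_k`: `k` triangles sharing the common vertex `0`. -/
def friendship (k : ℕ) : SimpleGraph (Fin (2 * k + 1)) :=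
  SimpleGraph.fromRel (fun i j => i.val = 0 ∨ j.val = 0 ∨ (i.val + 1) / 2 = (j.val + 1) / 2)

/-- The graph `T`: a triangle `0,1,2` and a vertex `3` joined to each triangle
vertex by a path of length two (through `4,5,6` respectively). -/
def graphT : SimpleGraph (Fin 7) :=
  SimpleGraph.fromRel (fun i j => (i, j) ∈
    ([(0,1),(1,2),(0,2),(0,4),(4,3),(1,5),(5,3),(2,6),(6,3)] : List (Fin 7 × Fin 7)))

/-!
Suppose an edge `xy` lies in no triangle. By `C4`-freeness no edge joins the neighbours of `x` other
than `y` to `y` and its neighbours other than `x`. Hence the function equal to `-1` on the former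
set, `1` on the latter and `0` elsewhere is 1-Lipschitz, and it witnesses
`κ(x, y) ≤ 2 / deg x + 1 / deg y - 1`, which is nonpositive as soon as `deg x ≥ 4` and `deg y ≥ 2`.
So every edge at a vertex `x` of degree at least `4` lies in a triangle, which is unique since there
is no 4-cycle. The edges opposite to `x` in these triangles then form a perfect matching of the
neighbours of `x`, so that `deg x` is even.
-/

section Curvature

variable {G : SimpleGraph V}

theorem abs_sub_le_length_of_forall_adj {f : V → ℝ} (hf : ∀ u v, G.Adj u v → |f u - f v| ≤ 1)
    {u v : V} (p : G.Walk u v) : |f u - f v| ≤ p.length := by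
  induction p with
  | nil => simp
  | @cons u w v huw p ih =>
    calc |f u - f v| ≤ |f u - f w| + |f w - f v| := abs_sub_le _ _ _
      _ ≤ 1 + p.length := add_le_add (hf u w huw) ih
      _ = (p.cons huw).length := by rw [SimpleGraph.Walk.length_cons]; push_cast; ring

theorem lip1_of_forall_adj (hconn : G.Connected) {f : V → ℝ}
    (hf : ∀ u v, G.Adj u v → |f u - f v| ≤ 1) : Lip1 G f := by
  intro u v
  obtain ⟨p, hp⟩ := hconn.exists_walk_length_eq_dist u v
  exact hp ▸ abs_sub_le_length_of_forall_adj hf p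

theorem lip1_indicator_sub_indicator (hconn : G.Connected) {A B : Set V}
    (hAB : ∀ a ∈ A, ∀ b ∈ B, ¬G.Adj a b) : Lip1 G (B.indicator 1 - A.indicator 1) := by
  refine lip1_of_forall_adj hconn fun u v huv ↦ ?_
  have huv' : u ∈ A → v ∉ B := fun hu hv ↦ hAB u hu v hv huv
  have hvu' : v ∈ A → u ∉ B := fun hv hu ↦ hAB v hv u hu huv.symm
  by_cases huA : u ∈ A <;> by_cases huB : u ∈ B <;> by_cases hvA : v ∈ A <;>
    by_cases hvB : v ∈ B <;> simp_all

variable [Fintype V]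

theorem deg_pos_of_adj {x y : V} (hxy : G.Adj x y) : 0 < deg G x :=
  card_pos.mpr ⟨y, by simpa using hxy⟩

theorem abs_lap_le_one {f : V → ℝ} (hf : Lip1 G f) (x : V) : |lap G f x| ≤ 1 := by
  have hsum : |∑ z with G.Adj x z, (f z - f x)| ≤ deg G x := by
    calc |∑ z with G.Adj x z, (f z - f x)| ≤ ∑ z with G.Adj x z, |f z - f x| :=
          abs_sum_le_sum_abs _ _
      _ ≤ ∑ z with G.Adj x z, (1 : ℝ) := by
          refine sum_le_sum fun z hz ↦ (hf z x).trans_eq ?_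
          have hzx : G.Adj z x := (mem_filter.mp hz).2.symm
          exact_mod_cast SimpleGraph.dist_eq_one_iff_adj.mpr hzx
      _ = deg G x := by rw [sum_const, nsmul_one]; rfl
  calc |lap G f x| = (deg G x : ℝ)⁻¹ * |∑ z with G.Adj x z, (f z - f x)| := by
        rw [lap, abs_mul, abs_of_nonneg (inv_nonneg.mpr (Nat.cast_nonneg _))]
    _ ≤ (deg G x : ℝ)⁻¹ * deg G x := by gcongr
    _ ≤ 1 := inv_mul_le_one

theorem kappa_le_lap_sub_lap {f : V → ℝ} {x y : V} (hf : Lip1 G f) (hxy : f y - f x = 1) :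
    kappa G x y ≤ lap G f x - lap G f y := by
  refine csInf_le ⟨-2, ?_⟩ ⟨f, hf, hxy, rfl⟩
  rintro _ ⟨g, hg, -, rfl⟩
  linarith [(abs_le.mp (abs_lap_le_one hg x)).1, (abs_le.mp (abs_lap_le_one hg y)).2]

theorem lap_eq_of_forall_adj_ne {f : V → ℝ} {x y : V} {c : ℝ} (hxy : G.Adj x y)
    (hf : ∀ z, G.Adj x z → z ≠ y → f z = c) :
    lap G f x = (f y - f x + (deg G x - 1) * (c - f x)) / deg G x := by
  have hy : y ∈ univ.filter (G.Adj x) := by simpa using hxy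
  have hrest : ∑ z ∈ (univ.filter (G.Adj x)).erase y, (f z - f x) =
      (deg G x - 1) * (c - f x) := by
    calc ∑ z ∈ (univ.filter (G.Adj x)).erase y, (f z - f x)
        = ∑ _ ∈ (univ.filter (G.Adj x)).erase y, (c - f x) := by
          refine sum_congr rfl fun z hz ↦ ?_
          obtain ⟨hzy, hz⟩ := mem_erase.mp hz
          rw [hf z (mem_filter.mp hz).2 hzy]
      _ = (deg G x - 1) * (c - f x) := by
          rw [sum_const, nsmul_eq_mul, cast_card_erase_of_mem hy]
          rfl
  rw [lap, ← add_sum_erase _ _ hy, hrest, div_eq_inv_mul]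

end Curvature

namespace C4Free

variable {G : SimpleGraph V}

theorem subsingleton_commonNeighbors (h4 : C4Free G) {a c : V} (hac : a ≠ c) :
    (G.commonNeighbors a c).Subsingleton := by
  rintro b ⟨hab : G.Adj a b, hcb : G.Adj c b⟩ d ⟨had : G.Adj a d, hcd : G.Adj c d⟩
  by_contra hbd
  exact h4 a b c d hab.ne hcb.ne' hcd.ne had.ne' hac hbd ⟨hab, hcb.symm, hcd, had.symm⟩

theorem isMatching_induce_neighborSet (h4 : C4Free G) {x : V}
    (htri : ∀ y, G.Adj x y → (G.commonNeighbors x y).Nonempty) :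
    ((⊤ : G.Subgraph).induce (G.neighborSet x)).IsMatching := by
  intro y (hxy : G.Adj x y)
  obtain ⟨z, hxz : G.Adj x z, hyz : G.Adj y z⟩ := htri y hxy
  refine ⟨z, ⟨hxy, hxz, hyz⟩, ?_⟩
  rintro w ⟨-, hxw : G.Adj x w, hyw : G.Adj y w⟩
  exact h4.subsingleton_commonNeighbors hxy.ne ⟨hxw, hyw⟩ ⟨hxz, hyz⟩

variable [Fintype V] {x y : V}

theorem kappa_le_of_commonNeighbors_eq_empty (h4 : C4Free G) (hconn : G.Connected)
    (hxy : G.Adj x y) (hcommon : G.commonNeighbors x y = ∅) :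
    kappa G x y ≤ 2 / deg G x + 1 / deg G y - 1 := by
  have hno (v : V) (hxv : G.Adj x v) : ¬G.Adj y v := fun hyv ↦
    Set.eq_empty_iff_forall_notMem.mp hcommon v ⟨hxv, hyv⟩
  set A : Set V := G.neighborSet x \ {y}
  set B : Set V := insert y (G.neighborSet y \ {x})
  set f : V → ℝ := B.indicator 1 - A.indicator 1 with hf
  have hAB : ∀ a ∈ A, ∀ b ∈ B, ¬G.Adj a b := by
    rintro a ⟨hxa : G.Adj x a, hay⟩ b (rfl | ⟨hyb : G.Adj y b, hbx⟩) hab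
    · exact hno a hxa hab.symm
    · exact hay (h4.subsingleton_commonNeighbors (Ne.symm hbx) ⟨hxa, hab.symm⟩ ⟨hxy, hyb.symm⟩)
  have hfx : f x = 0 := by simp [hf, A, B, hxy.ne]
  have hfy : f y = 1 := by simp [hf, A, B]
  have hfA (z : V) (hxz : G.Adj x z) (hzy : z ≠ y) : f z = -1 := by
    simp [hf, A, B, hxz, hzy, hno z hxz]
  have hfB (z : V) (hyz : G.Adj y z) (hzx : z ≠ x) : f z = 1 := by
    have hxz : ¬G.Adj x z := fun hxz ↦ hno z hxz hyz
    simp [hf, A, B, hyz, hzx, hxz]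
  have hx : (deg G x : ℝ) ≠ 0 := by exact_mod_cast (deg_pos_of_adj hxy).ne'
  calc kappa G x y ≤ lap G f x - lap G f y :=
        kappa_le_lap_sub_lap (lip1_indicator_sub_indicator hconn hAB) (by rw [hfx, hfy, sub_zero])
    _ = 2 / deg G x + 1 / deg G y - 1 := by
        rw [lap_eq_of_forall_adj_ne hxy hfA, lap_eq_of_forall_adj_ne hxy.symm hfB, hfx, hfy]
        field_simp
        ring

theorem nonempty_commonNeighbors_of_kappa_pos (h4 : C4Free G) (hconn : G.Connected)
    (hxy : G.Adj x y) (hx : 4 ≤ deg G x) (hy : 2 ≤ deg G y) (hpos : 0 < kappa G x y) :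
    (G.commonNeighbors x y).Nonempty := by
  by_contra hcommon
  have hbound := h4.kappa_le_of_commonNeighbors_eq_empty hconn hxy
    (Set.not_nonempty_iff_eq_empty.mp hcommon)
  have hx' : (2 : ℝ) / deg G x ≤ 2 / 4 := by gcongr; exact_mod_cast hx
  have hy' : (1 : ℝ) / deg G y ≤ 1 / 2 := by gcongr; exact_mod_cast hy
  linarith

theorem even_deg_of_forall_nonempty_commonNeighbors (h4 : C4Free G)
    (htri : ∀ y, G.Adj x y → (G.commonNeighbors x y).Nonempty) : Even (deg G x) := by
  have hdeg : #((⊤ : G.Subgraph).induce (G.neighborSet x)).verts.toFinset = deg G x := by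
    rw [deg]
    congr 1
    ext
    simp
  exact hdeg ▸ (h4.isMatching_induce_neighborSet htri).even_card

end C4Free

theorem exists_maxDeg_eq_deg [Fintype V] [Nonempty V] (G : SimpleGraph V) :
    ∃ x, maxDeg G = deg G x := by
  obtain ⟨x, -, hx⟩ := exists_mem_eq_sup univ univ_nonempty (deg G)
  exact ⟨x, hx⟩

theorem stmt9_general [Fintype V] {G : SimpleGraph V} (hconn : G.Connected) (h4 : C4Free G) {x : V}
    (hx : 4 ≤ deg G x) (hpos : ∀ y, G.Adj x y → 0 < kappa G x y)
    (hmin : ∀ y, G.Adj x y → 2 ≤ deg G y) : Even (deg G x) :=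
  h4.even_deg_of_forall_nonempty_commonNeighbors fun y hxy ↦
    h4.nonempty_commonNeighbors_of_kappa_pos hconn hxy hx (hmin y hxy) (hpos y hxy)

theorem stmt9 [Fintype V] (G : SimpleGraph V) (hconn : G.Connected)
    (h4 : C4Free G) (hpos : PosLLY G) (hmin : ∀ v : V, 2 ≤ deg G v)
    (hmax : 4 ≤ maxDeg G) :
    Even (maxDeg G) := by
  have := hconn.nonempty
  obtain ⟨x, hx⟩ := exists_maxDeg_eq_deg G
  exact hx ▸ stmt9_general hconn h4 (hx ▸ hmax) (hpos x) fun y _ ↦ hmin y
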